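/- There is no invertible element R ∈ Q⊗Q such that R·Δ(a) = Δ^op(a)·R for all a ∈ Q and both hexagon identities (Δ⊗id)(R) = R₁₃·R₂₃ and (id⊗Δ)(R) = R₁₃·R₁₂ hold. In other words, the Hopf algebra Q = \bar U_i sl(2) admits no universal R-matrix, so its representation category is not braidable. -/

import Mathlib

open TensorProduct

set_option maxHeartbeats 1000000
set_option synthInstance.maxHeartbeats 400000

noncomputable section

/-- Generators of the restricted quantum group `Q = \bar U_i sl(2)`. -/
inductive QGen : Type
  | E | F | K | Kinv
deriving DecidableEq

/-- The free algebra on the generators. -/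
abbrev FA : Type := FreeAlgebra ℂ QGen

def ιE : FA := FreeAlgebra.ι ℂ QGen.E
def ιF : FA := FreeAlgebra.ι ℂ QGen.F
def ιK : FA := FreeAlgebra.ι ℂ QGen.K
def ιKi : FA := FreeAlgebra.ι ℂ QGen.Kinv

/-- Defining relations of `\bar U_i sl(2)` (at `q = i`, i.e. `p = 2`). -/
inductive QRel : FA → FA → Prop
  | KKi : QRel (ιK * ιKi) 1
  | KiK : QRel (ιKi * ιK) 1
  | KEKi : QRel (ιK * ιE * ιKi) (-ιE)
  | KFKi : QRel (ιK * ιF * ιKi) (-ιF)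
  | EF : QRel (ιE * ιF - ιF * ιE) ((2 * Complex.I)⁻¹ • (ιK - ιKi))
  | Esq : QRel (ιE ^ 2) 0
  | Fsq : QRel (ιF ^ 2) 0
  | K4 : QRel (ιK ^ 4) 1

/-- The restricted quantum group `\bar U_i sl(2)`: the quotient of the free algebra
by the two-sided ideal generated by the defining relations. -/
abbrev Q : Type := RingQuot QRel

def gE : Q := RingQuot.mkAlgHom ℂ QRel ιE
def gF : Q := RingQuot.mkAlgHom ℂ QRel ιF
def gK : Q := RingQuot.mkAlgHom ℂ QRel ιK
def gKi : Q := RingQuot.mkAlgHom ℂ QRel ιKi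

section Gadgets

variable (k : Type) [Field k] (A : Type) [Ring A] [Algebra k A]

abbrev TP2 : Type := A ⊗[k] A
abbrev TP3 : Type := A ⊗[k] (A ⊗[k] A)
abbrev TP4 : Type := A ⊗[k] (A ⊗[k] (A ⊗[k] A))

/-- Multiplication `a ⊗ b ↦ a * b`. -/
def mulA : TP2 k A →ₗ[k] A := LinearMap.mul' k A

/-- Tensor flip `a ⊗ b ↦ b ⊗ a`. -/
def flipA : TP2 k A →ₗ[k] TP2 k A := (TensorProduct.comm k A A).toLinearMap

/-- `a ↦ a ⊗ 1`. -/
def lTen : A →ₗ[k] TP2 k A := (TensorProduct.mk k A A).flip 1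

/-- `a ↦ 1 ⊗ a`. -/
def rTen : A →ₗ[k] TP2 k A := TensorProduct.mk k A A 1

/-- `a ⊗ b ↦ a ⊗ b ⊗ 1`. -/
def emb12 : TP2 k A →ₗ[k] TP3 k A := TensorProduct.map LinearMap.id (lTen k A)

/-- `a ⊗ b ↦ a ⊗ 1 ⊗ b`. -/
def emb13 : TP2 k A →ₗ[k] TP3 k A := TensorProduct.map LinearMap.id (rTen k A)

/-- `a ⊗ b ↦ 1 ⊗ a ⊗ b`. -/
def emb23 : TP2 k A →ₗ[k] TP3 k A := TensorProduct.mk k A (TP2 k A) 1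

/-- `a ⊗ b ⊗ c ↦ a ⊗ c ⊗ b`. -/
def perm132 : TP3 k A →ₗ[k] TP3 k A := TensorProduct.map LinearMap.id (flipA k A)

/-- `a ⊗ b ⊗ c ↦ b ⊗ c ⊗ a`. -/
def perm231 : TP3 k A →ₗ[k] TP3 k A :=
  (TensorProduct.assoc k A A A).toLinearMap ∘ₗ (TensorProduct.comm k A (TP2 k A)).toLinearMap

/-- `a ⊗ b ⊗ c ↦ c ⊗ a ⊗ b`. -/
def perm312 : TP3 k A →ₗ[k] TP3 k A :=
  (TensorProduct.comm k (TP2 k A) A).toLinearMap ∘ₗ (TensorProduct.assoc k A A A).symm.toLinearMap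

/-- `a ⊗ b ⊗ c ↦ b ⊗ a ⊗ c`. -/
def perm213 : TP3 k A →ₗ[k] TP3 k A :=
  (TensorProduct.assoc k A A A).toLinearMap ∘ₗ
    (TensorProduct.map (flipA k A) LinearMap.id) ∘ₗ (TensorProduct.assoc k A A A).symm.toLinearMap

variable {k A}

/-- `(Δ ⊗ id)` on two tensor factors, landing in the triple tensor product. -/
def copL (D : A →ₐ[k] TP2 k A) : TP2 k A →ₗ[k] TP3 k A :=
  (TensorProduct.assoc k A A A).toLinearMap ∘ₗ TensorProduct.map D.toLinearMap LinearMap.id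

/-- `(id ⊗ Δ)` on two tensor factors. -/
def copR (D : A →ₐ[k] TP2 k A) : TP2 k A →ₗ[k] TP3 k A :=
  TensorProduct.map LinearMap.id D.toLinearMap

/-- `(ε ⊗ id) : A ⊗ A → A`. -/
def cuL (ce : A →ₐ[k] k) : TP2 k A →ₗ[k] A :=
  (TensorProduct.lid k A).toLinearMap ∘ₗ TensorProduct.map ce.toLinearMap LinearMap.id

/-- `(id ⊗ ε) : A ⊗ A → A`. -/
def cuR (ce : A →ₐ[k] k) : TP2 k A →ₗ[k] A :=
  (TensorProduct.rid k A).toLinearMap ∘ₗ TensorProduct.map LinearMap.id ce.toLinearMap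

/-- `(id ⊗ ε ⊗ id) : A ⊗ A ⊗ A → A ⊗ A`. -/
def cuMid (ce : A →ₐ[k] k) : TP3 k A →ₗ[k] TP2 k A :=
  TensorProduct.map LinearMap.id (cuL ce)

/-- `(Δ ⊗ id ⊗ id)`. -/
def cop4_1 (D : A →ₐ[k] TP2 k A) : TP3 k A →ₗ[k] TP4 k A :=
  (TensorProduct.assoc k A A (TP2 k A)).toLinearMap ∘ₗ TensorProduct.map D.toLinearMap LinearMap.id

/-- `(id ⊗ Δ ⊗ id)`. -/
def cop4_2 (D : A →ₐ[k] TP2 k A) : TP3 k A →ₗ[k] TP4 k A :=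
  TensorProduct.map LinearMap.id (copL D)

/-- `(id ⊗ id ⊗ Δ)`. -/
def cop4_3 (D : A →ₐ[k] TP2 k A) : TP3 k A →ₗ[k] TP4 k A :=
  TensorProduct.map LinearMap.id (copR D)

/-- `a ⊗ b ⊗ c ↦ a ⊗ b ⊗ c ⊗ 1`, i.e. `Φ ↦ Φ ⊗ 1`. -/
def pad4 : TP3 k A →ₗ[k] TP4 k A :=
  TensorProduct.map LinearMap.id (TensorProduct.map LinearMap.id (lTen k A))

/-- `a ⊗ b ⊗ c ↦ f(a) * g(b) * h(c)`. -/
def tmap3 (f g h : A →ₗ[k] A) : TP3 k A →ₗ[k] A :=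
  mulA k A ∘ₗ TensorProduct.map f (mulA k A ∘ₗ TensorProduct.map g h)

/-- `a ⊗ b ↦ S(a) * b`, used in the antipode axiom `m ∘ (S ⊗ id) ∘ Δ = 1·ε`. -/
def antipL (s : A →ₗ[k] A) : TP2 k A →ₗ[k] A := mulA k A ∘ₗ TensorProduct.map s LinearMap.id

/-- `a ⊗ b ↦ a * S(b)`. -/
def antipR (s : A →ₗ[k] A) : TP2 k A →ₗ[k] A := mulA k A ∘ₗ TensorProduct.map LinearMap.id s

end Gadgets

/-- Central idempotent `e₀ = (1 + K²)/2`. -/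
def e0 : Q := (2:ℂ)⁻¹ • (1 + gK ^ 2)

/-- Central idempotent `e₁ = (1 − K²)/2`. -/
def e1 : Q := (2:ℂ)⁻¹ • (1 - gK ^ 2)

/-- `f⁺ = −i F`. -/
def fp : Q := (-Complex.I) • gF

/-- `f⁻ = E K⁻¹`. -/
def fm : Q := gE * gKi

/-- The Casimir element `C = FE − (i/4)(K − K⁻¹)`. -/
def Cas : Q := gF * gE - (Complex.I / 4) • (gK - gKi)

def t2 (a b : Q) : TP2 ℂ Q := a ⊗ₜ[ℂ] b

def t3 (a b c : Q) : TP3 ℂ Q := a ⊗ₜ[ℂ] (b ⊗ₜ[ℂ] c)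

def eEF : Q := gE * gF
def eEK : Q := gE * gK
def eFK : Q := gF * gK
def eEFK : Q := gE * gF * gK

/-- `Φ^{010}` component of the coassociator. -/
def Phi010 : TP3 ℂ Q :=
  t3 1 1 1 - (1 + Complex.I) • t3 gE gK gF + (1 - Complex.I) • t3 eFK gK eEK
    + (2:ℂ) • t3 eEFK 1 eEFK

/-- `Φ^{101}` component of the coassociator. -/
def Phi101 : TP3 ℂ Q :=
  (Complex.I - 1) • t3 1 gF eEK + t3 1 gK 1 + (2:ℂ) • t3 1 eEF eEFK
    - (1 + Complex.I) • t3 1 eEK gF - (1 + Complex.I) • t3 gE eFK 1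
    + (2 * Complex.I) • t3 gE eEFK gF + (1 - Complex.I) • t3 eFK gE 1
    - (2 * Complex.I) • t3 eFK eEFK eEK - (2:ℂ) • t3 eEFK eEF 1

/-- `Φ^{111}` component of the coassociator. -/
def Phi111 (β : ℂ) : TP3 ℂ Q :=
  (Complex.I * β ^ 2) • (
    (1 + Complex.I) • t3 1 gF eEK - t3 1 gK 1 - (2:ℂ) • t3 1 eEF 1
      - (2 * Complex.I) • t3 1 eEF eEFK + (1 + Complex.I) • t3 1 eEK gF
      - (1 + Complex.I) • t3 gE 1 gF + (1 + Complex.I) • t3 gE eFK 1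
      + (2 * Complex.I) • t3 gE eFK eEFK + (2:ℂ) • t3 gE eEFK gF
      - (1 + Complex.I) • t3 eFK 1 eEK + (1 + Complex.I) • t3 eFK gE 1
      + (2 * Complex.I) • t3 eFK gE eEFK + (2:ℂ) • t3 eFK eEFK eEK
      + (2 * Complex.I) • t3 eEFK gF eEK + (2 * Complex.I) • t3 eEFK gK eEFK
      - (2 * Complex.I) • t3 eEFK eEF 1 + (2 * Complex.I) • t3 eEFK eEK gF
      + (4:ℂ) • t3 eEFK eEF eEFK)

/-- The coassociator `Φ` of the quasi-Hopf algebra structure on `Q`. -/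
def Phi (β : ℂ) : TP3 ℂ Q :=
  t3 e0 e0 e0 + t3 e1 e0 e0 + Phi010 * t3 e0 e1 e0 + t3 e0 e0 e1
    + t3 e1 e1 e0 + Phi101 * t3 e1 e0 e1 + t3 e0 e1 e1 + Phi111 β * t3 e1 e1 e1

def R00 : TP2 ℂ Q :=
  (2:ℂ)⁻¹ • ((t2 1 1 + t2 1 gK + t2 gK 1 - t2 gK gK) * (t2 1 1 + (2 * Complex.I) • t2 gE gF))

def R01 : TP2 ℂ Q :=
  (2:ℂ)⁻¹ • ((t2 1 1 - Complex.I • t2 1 gK + t2 gK 1 + Complex.I • t2 gK gK) *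
    (t2 1 1 + (1 - Complex.I) • t2 eFK eEK - (1 - Complex.I) • t2 gE gF
      + (1 + Complex.I) • t2 eEFK 1 + (2 * Complex.I) • t2 eEFK eEFK))

def R10 : TP2 ℂ Q :=
  (2:ℂ)⁻¹ • ((t2 1 1 + t2 1 gK - Complex.I • t2 gK 1 + Complex.I • t2 gK gK) *
    (t2 1 gK + (1 - Complex.I) • t2 eFK gE + (1 - Complex.I) • t2 gE eFK
      - (1 - Complex.I) • t2 1 eEF - (2 * Complex.I) • t2 eEFK eEF))

def R11 (β : ℂ) : TP2 ℂ Q :=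
  (β / 2) • ((t2 1 1 - Complex.I • t2 1 gK - Complex.I • t2 gK 1 + t2 gK gK) *
    ((-Complex.I) • t2 gK 1 + (2 * Complex.I) • t2 eEK gF + (1 - Complex.I) • t2 gK eEFK
      - (1 + Complex.I) • t2 eEF 1 - (2 * Complex.I) • t2 eEF eEFK))

/-- The universal R-matrix `R` of the quasi-triangular quasi-Hopf structure on `Q`. -/
def Rmat (β : ℂ) : TP2 ℂ Q :=
  R00 * t2 e0 e0 + R01 * t2 e0 e1 + R10 * t2 e1 e0 + R11 β * t2 e1 e1

/-- The standard R-matrix `R_st` of the quotient `Q/(K²-1)`. -/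
def Rst : TP2 ℂ Q :=
  (2:ℂ)⁻¹ • ∑ m ∈ Finset.range 2, ∑ n ∈ Finset.range 2,
    ((-1:ℂ) ^ (m * n)) • (t2 (gK ^ m) (gK ^ n) * (t2 1 1 + (2 * Complex.I) • t2 gE gF))

/-- The monodromy matrix `M = R₂₁ · R`. -/
def Mmat (β : ℂ) : TP2 ℂ Q := flipA ℂ Q (Rmat β) * Rmat β

/-- The ribbon element `v = (e₀ − iβ K e₁)(1 − 2 f⁺ f⁻)`. -/
def vRib (β : ℂ) : Q := (e0 - (Complex.I * β) • (gK * e1)) * (1 - (2:ℂ) • (fp * fm))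

/-- The coevaluation element `β = e₀ − 2iβ² C e₁`. -/
def bbEl (β : ℂ) : Q := e0 - (2 * Complex.I * β ^ 2) • (Cas * e1)

/-- `b ⊗ c ↦ S(b · bb · S(c))`, inner part of the Drinfeld element. -/
def uInner (S : Q →ₗ[ℂ] Q) (bb : Q) : TP2 ℂ Q →ₗ[ℂ] Q :=
  S ∘ₗ mulA ℂ Q ∘ₗ TensorProduct.map (LinearMap.mulRight ℂ bb) S

/-- `Φ' ⊗ Φ'' ⊗ Φ''' ↦ S(Φ'' · bb · S(Φ''')) ⊗ Φ'`. -/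
def uMap1 (S : Q →ₗ[ℂ] Q) (bb : Q) : TP3 ℂ Q →ₗ[ℂ] TP2 ℂ Q :=
  TensorProduct.map (uInner S bb) LinearMap.id ∘ₗ (TensorProduct.comm ℂ Q (TP2 ℂ Q)).toLinearMap

/-- `R' ⊗ R'' ↦ S(R'') · al · R'`. -/
def uMap2 (S : Q →ₗ[ℂ] Q) (al : Q) : TP2 ℂ Q →ₗ[ℂ] Q :=
  mulA ℂ Q ∘ₗ TensorProduct.map (LinearMap.mulRight ℂ al ∘ₗ S) LinearMap.id ∘ₗ
    (TensorProduct.comm ℂ Q Q).toLinearMap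

/-- `(x ⊗ a) ⊗ (R' ⊗ R'') ↦ x · (S(R'') · al · R') · a`. -/
def uBig (S : Q →ₗ[ℂ] Q) (al : Q) : TP2 ℂ Q ⊗[ℂ] TP2 ℂ Q →ₗ[ℂ] Q :=
  mulA ℂ Q ∘ₗ TensorProduct.map LinearMap.id (mulA ℂ Q ∘ₗ (TensorProduct.comm ℂ Q Q).toLinearMap)
    ∘ₗ (TensorProduct.assoc ℂ Q Q Q).toLinearMap ∘ₗ TensorProduct.map LinearMap.id (uMap2 S al)

/-- The Drinfeld element `u = Σ S(Φ''·b·S(Φ'''))·S(R'')·α·R'·Φ'` (with `α = 1`). -/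
def uDrin (β : ℂ) (S : Q →ₗ[ℂ] Q) : Q :=
  uBig S 1 (uMap1 S (bbEl β) (Phi β) ⊗ₜ[ℂ] Rmat β)

/-- The balancing element `g = b · S(α) · v⁻¹ · u` (with `α = 1`). -/
def balG (β : ℂ) (S : Q →ₗ[ℂ] Q) : Q :=
  bbEl β * S 1 * Ring.inverse (vRib β) * uDrin β S

/-- The cointegral `c = (β²/i)·E·F·(1 + K + K² + K³)`. -/
def cInt (β : ℂ) : Q := (β ^ 2 / Complex.I) • (gE * gF * (1 + gK + gK ^ 2 + gK ^ 3))

/-- The q-trace of a one-dimensional representation, with balancing element `K⁻¹`. -/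
def qTr1 (ρ : Q →ₐ[ℂ] ℂ) : Q →ₗ[ℂ] ℂ := ρ.toLinearMap ∘ₗ LinearMap.mulLeft ℂ gK

/-- The q-trace of a two-dimensional (matrix) representation, with balancing element `K⁻¹`. -/
def qTrM (ρ : Q →ₐ[ℂ] Matrix (Fin 2) (Fin 2) ℂ) : Q →ₗ[ℂ] ℂ :=
  Matrix.traceLinearMap (Fin 2) ℂ ℂ ∘ₗ ρ.toLinearMap ∘ₗ LinearMap.mulLeft ℂ gK

/-- The Drinfeld mapping `φ ↦ (φ ⊗ id)(M)`. -/
def drinfeldImg (β : ℂ) (φ : Q →ₗ[ℂ] ℂ) : Q :=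
  (TensorProduct.lid ℂ Q) (TensorProduct.map φ LinearMap.id (Mmat β))

/-! ### Proof -/

lemma rel_KKi : gK * gKi = 1 := by
  simpa [gK, gKi] using RingQuot.mkAlgHom_rel ℂ QRel.KKi

lemma rel_K4 : gK ^ 4 = 1 := by
  simpa [gK] using RingQuot.mkAlgHom_rel ℂ QRel.K4

lemma gKi_eq : gKi = gK ^ 3 := by
  calc gKi = gK ^ 4 * gKi := by rw [rel_K4, one_mul]
    _ = gK ^ 3 * (gK * gKi) := by rw [pow_succ, mul_assoc]
    _ = gK ^ 3 := by rw [rel_KKi, mul_one]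

/-- A subalgebra of `Q` containing `E`, `F`, `K` is everything. -/
lemma Q_mem (S : Subalgebra ℂ Q) (hE : gE ∈ S) (hF : gF ∈ S) (hK : gK ∈ S) (a : Q) : a ∈ S := by
  obtain ⟨x, rfl⟩ := RingQuot.mkAlgHom_surjective ℂ QRel a
  induction x using FreeAlgebra.induction with
  | grade0 r => simp only [AlgHom.commutes]; exact S.algebraMap_mem r
  | grade1 y =>
    cases y with
    | E => exact hE
    | F => exact hF
    | K => exact hK
    | Kinv =>
      have : gKi ∈ S := by rw [gKi_eq]; exact S.pow_mem hK 3
      exact this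
  | mul a b ha hb => rw [map_mul]; exact S.mul_mem ha hb
  | add a b ha hb => rw [map_add]; exact S.add_mem ha hb

lemma Q_ext {B : Type} [Ring B] [Algebra ℂ B] (f g : Q →ₐ[ℂ] B) (hE : f gE = g gE)
    (hF : f gF = g gF) (hK : f gK = g gK) : f = g := by
  ext1
  ext a
  exact Q_mem (AlgHom.equalizer f g) hE hF hK _

/-- The representation of the free algebra with prescribed images of generators. -/
def genMap {B : Type} (e f k ki : B) : QGen → B
  | .E => e
  | .F => f
  | .K => k
  | .Kinv => ki

/-- Universal property of `Q`. -/
def liftQ {B : Type} [Ring B] [Algebra ℂ B] (e f k ki : B)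
    (h1 : k * ki = 1) (h2 : ki * k = 1) (h3 : k * e * ki = -e) (h4 : k * f * ki = -f)
    (h5 : e * f - f * e = (2 * Complex.I)⁻¹ • (k - ki)) (h6 : e ^ 2 = 0) (h7 : f ^ 2 = 0)
    (h8 : k ^ 4 = 1) : Q →ₐ[ℂ] B :=
  RingQuot.liftAlgHom ℂ ⟨FreeAlgebra.lift ℂ (genMap e f k ki), by
    intro x y h
    cases h <;> simp only [map_mul, map_sub, map_neg, map_pow, map_smul, map_one, map_zero,
      ιE, ιF, ιK, ιKi, FreeAlgebra.lift_ι_apply, genMap] <;> assumption⟩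

section
variable {B : Type} [Ring B] [Algebra ℂ B] (e f k ki : B)
    (h1 : k * ki = 1) (h2 : ki * k = 1) (h3 : k * e * ki = -e) (h4 : k * f * ki = -f)
    (h5 : e * f - f * e = (2 * Complex.I)⁻¹ • (k - ki)) (h6 : e ^ 2 = 0) (h7 : f ^ 2 = 0)
    (h8 : k ^ 4 = 1)

lemma liftQ_E : liftQ e f k ki h1 h2 h3 h4 h5 h6 h7 h8 gE = e := by
  simp [liftQ, gE, ιE, genMap]
lemma liftQ_F : liftQ e f k ki h1 h2 h3 h4 h5 h6 h7 h8 gF = f := by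
  simp [liftQ, gF, ιF, genMap]
lemma liftQ_K : liftQ e f k ki h1 h2 h3 h4 h5 h6 h7 h8 gK = k := by
  simp [liftQ, gK, ιK, genMap]
lemma liftQ_Ki : liftQ e f k ki h1 h2 h3 h4 h5 h6 h7 h8 gKi = ki := by
  simp [liftQ, gKi, ιKi, genMap]
end

/-- The one-dimensional representations: `E, F ↦ 0`, `K ↦ ±1`. -/
lemma exists_char (s : ℂ) (hs : s * s = 1) :
    ∃ χ : Q →ₐ[ℂ] ℂ, χ gE = 0 ∧ χ gF = 0 ∧ χ gK = s ∧ χ gKi = s :=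
  ⟨liftQ 0 0 s s hs hs (by simp) (by simp) (by simp) (by simp) (by simp)
    (by linear_combination (s * s + 1) * hs), liftQ_E .., liftQ_F .., liftQ_K .., liftQ_Ki ..⟩

/-- The two-dimensional simple representation. -/
lemma exists_rep :
    ∃ ρ : Q →ₐ[ℂ] Matrix (Fin 2) (Fin 2) ℂ, ρ gE = !![0, 1; 0, 0] ∧ ρ gF = !![0, 0; 1, 0] ∧
      ρ gK = !![Complex.I, 0; 0, -Complex.I] ∧ ρ gKi = !![-Complex.I, 0; 0, Complex.I] := by
  refine ⟨liftQ _ _ _ _ ?_ ?_ ?_ ?_ ?_ ?_ ?_ ?_, liftQ_E .., liftQ_F .., liftQ_K .., liftQ_Ki ..⟩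
  · ext i j; fin_cases i <;> fin_cases j <;> simp [Matrix.mul_apply, Fin.sum_univ_two]
  · ext i j; fin_cases i <;> fin_cases j <;> simp [Matrix.mul_apply, Fin.sum_univ_two]
  · ext i j; fin_cases i <;> fin_cases j <;> simp [Matrix.mul_apply, Fin.sum_univ_two]
  · ext i j; fin_cases i <;> fin_cases j <;> simp [Matrix.mul_apply, Fin.sum_univ_two]
  · have hI : Complex.I ≠ 0 := Complex.I_ne_zero
    ext i j; fin_cases i <;> fin_cases j <;> simp [Matrix.mul_apply, Fin.sum_univ_two] <;>
      field_simp <;> norm_num [Complex.I_sq]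
  · ext i j; fin_cases i <;> fin_cases j <;> simp [pow_two, Matrix.mul_apply, Fin.sum_univ_two]
  · ext i j; fin_cases i <;> fin_cases j <;> simp [pow_two, Matrix.mul_apply, Fin.sum_univ_two]
  · ext i j; fin_cases i <;> fin_cases j <;> simp [pow_succ, Matrix.mul_apply, Fin.sum_univ_two]

/-- Apply a character to the first tensor factor. -/
def evL {B : Type} [Ring B] [Algebra ℂ B] (χ : Q →ₐ[ℂ] ℂ) : Q ⊗[ℂ] B →ₐ[ℂ] B :=
  Algebra.TensorProduct.lift ((Algebra.ofId ℂ B).comp χ) (AlgHom.id ℂ B)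
    (fun x y => Algebra.commutes (χ x) y)

lemma evL_tmul {B : Type} [Ring B] [Algebra ℂ B] (χ : Q →ₐ[ℂ] ℂ) (a : Q) (b : B) :
    evL χ (a ⊗ₜ[ℂ] b) = χ a • b := by
  rw [Algebra.smul_def]
  exact Algebra.TensorProduct.lift_tmul _ _ _ a b

lemma evL_hexL (Δ : Q →ₐ[ℂ] TP2 ℂ Q) (α β γ : Q →ₐ[ℂ] ℂ)
    (h : ∀ a, β (evL α (Δ a)) = γ a) (R : TP2 ℂ Q)
    (hR : copL Δ R = emb13 ℂ Q R * emb23 ℂ Q R) :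
    evL γ R = evL α R * evL β R := by
  have k1 : ∀ X : TP2 ℂ Q, evL β (evL α (emb13 ℂ Q X)) = evL α X := by
    intro X
    induction X using TensorProduct.induction_on with
    | zero => simp
    | tmul a b => simp [emb13, rTen, evL_tmul]
    | add x y hx hy => simp only [map_add, hx, hy]
  have k2 : ∀ X : TP2 ℂ Q, evL β (evL α (emb23 ℂ Q X)) = evL β X := by
    intro X
    simp [emb23, evL_tmul]
  have k3 : ∀ (X : TP2 ℂ Q) (b : Q),
      evL β (evL α (TensorProduct.assoc ℂ Q Q Q (X ⊗ₜ[ℂ] b))) = β (evL α X) • b := by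
    intro X b
    induction X using TensorProduct.induction_on with
    | zero => simp
    | tmul a c => simp [evL_tmul, mul_smul]
    | add x y hx hy => simp only [map_add, TensorProduct.add_tmul, hx, hy, add_smul]
  have k4 : ∀ X : TP2 ℂ Q, evL β (evL α (copL Δ X)) = evL γ X := by
    intro X
    induction X using TensorProduct.induction_on with
    | zero => simp
    | tmul a b =>
      have : copL Δ (a ⊗ₜ[ℂ] b) = TensorProduct.assoc ℂ Q Q Q (Δ a ⊗ₜ[ℂ] b) := by simp [copL]
      rw [this, k3, h, evL_tmul]
    | add x y hx hy => simp only [map_add, hx, hy]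
  rw [← k4, hR, map_mul, map_mul, k1, k2]

lemma evL_hexR (Δ : Q →ₐ[ℂ] TP2 ℂ Q) (χ : Q →ₐ[ℂ] ℂ) (R : TP2 ℂ Q)
    (hR : copR Δ R = emb13 ℂ Q R * emb12 ℂ Q R) :
    Δ (evL χ R) = evL χ R ⊗ₜ[ℂ] evL χ R := by
  have k1 : ∀ X : TP2 ℂ Q, evL χ (emb13 ℂ Q X) = (1 : Q) ⊗ₜ[ℂ] evL χ X := by
    intro X
    induction X using TensorProduct.induction_on with
    | zero => simp
    | tmul a b => simp [emb13, rTen, evL_tmul]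
    | add x y hx hy => simp only [map_add, hx, hy, TensorProduct.tmul_add]
  have k2 : ∀ X : TP2 ℂ Q, evL χ (emb12 ℂ Q X) = evL χ X ⊗ₜ[ℂ] (1 : Q) := by
    intro X
    induction X using TensorProduct.induction_on with
    | zero => simp
    | tmul a b => simp [emb12, lTen, evL_tmul, TensorProduct.smul_tmul']
    | add x y hx hy => simp only [map_add, hx, hy, TensorProduct.add_tmul]
  have k3 : ∀ X : TP2 ℂ Q, evL χ (copR Δ X) = Δ (evL χ X) := by
    intro X
    induction X using TensorProduct.induction_on with
    | zero => simp
    | tmul a b => simp [copR, evL_tmul]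
    | add x y hx hy => simp only [map_add, hx, hy]
  rw [← k3, hR, map_mul, k1, k2, Algebra.TensorProduct.tmul_mul_tmul, one_mul, mul_one]

/-- Linear action `a ⊗ b ↦ (X ↦ ρ(a) X ρ(b)ᵀ)` of `Q ⊗ Q` on matrices. -/
def actM (ρ : Q →ₐ[ℂ] Matrix (Fin 2) (Fin 2) ℂ) (X : Matrix (Fin 2) (Fin 2) ℂ) :
    TP2 ℂ Q →ₗ[ℂ] Matrix (Fin 2) (Fin 2) ℂ :=
  TensorProduct.lift (LinearMap.mk₂ ℂ (fun a b => ρ a * X * (ρ b).transpose)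
    (by intros; simp [add_mul]) (by intros; simp)
    (by intros; simp [mul_add]) (by intros; simp))

lemma actM_tmul (ρ : Q →ₐ[ℂ] Matrix (Fin 2) (Fin 2) ℂ) (X : Matrix (Fin 2) (Fin 2) ℂ) (a b : Q) :
    actM ρ X (a ⊗ₜ[ℂ] b) = ρ a * X * (ρ b).transpose := by
  simp [actM]

lemma actM_mul (ρ : Q →ₐ[ℂ] Matrix (Fin 2) (Fin 2) ℂ) (X : Matrix (Fin 2) (Fin 2) ℂ)
    (Y Z : TP2 ℂ Q) : actM ρ X (Y * Z) = actM ρ (actM ρ X Z) Y := by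
  have key : ∀ (a b : Q) (W : TP2 ℂ Q),
      actM ρ X (a ⊗ₜ[ℂ] b * W) = ρ a * actM ρ X W * (ρ b).transpose := by
    intro a b W
    induction W using TensorProduct.induction_on with
    | zero => simp
    | tmul c d =>
      simp [actM_tmul, Algebra.TensorProduct.tmul_mul_tmul, Matrix.transpose_mul, mul_assoc]
    | add x y hx hy => simp only [mul_add, map_add, hx, hy, add_mul]
  induction Y using TensorProduct.induction_on with
  | zero => simp
  | tmul a b => rw [key, actM_tmul]
  | add x y hx hy => simp only [add_mul, map_add, hx, hy]

lemma actM_smul (ρ : Q →ₐ[ℂ] Matrix (Fin 2) (Fin 2) ℂ) (X : Matrix (Fin 2) (Fin 2) ℂ) (c : ℂ)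
    (Y : TP2 ℂ Q) : actM ρ (c • X) Y = c • actM ρ X Y := by
  induction Y using TensorProduct.induction_on with
  | zero => simp
  | tmul a b => simp [actM_tmul]
  | add x y hx hy => simp only [map_add, hx, hy, smul_add]

/-- An invariant vector in the tensor square generates the trivial representation. -/
lemma actM_inv (Δ : Q →ₐ[ℂ] TP2 ℂ Q) (ρ : Q →ₐ[ℂ] Matrix (Fin 2) (Fin 2) ℂ)
    (ε : Q →ₐ[ℂ] ℂ) (J : Matrix (Fin 2) (Fin 2) ℂ)
    (hE : actM ρ J (Δ gE) = ε gE • J) (hF : actM ρ J (Δ gF) = ε gF • J)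
    (hK : actM ρ J (Δ gK) = ε gK • J) (a : Q) : actM ρ J (Δ a) = ε a • J := by
  let S : Subalgebra ℂ Q :=
    { carrier := {a | actM ρ J (Δ a) = ε a • J}
      mul_mem' := by
        intro x y hx hy
        simp only [Set.mem_ofPred_eq] at hx hy ⊢
        rw [map_mul, actM_mul, hy, actM_smul, hx, map_mul, smul_smul, mul_comm]
      add_mem' := by
        intro x y hx hy
        simp only [Set.mem_ofPred_eq] at hx hy ⊢
        rw [map_add, map_add, map_add, hx, hy, add_smul]
      algebraMap_mem' := by
        intro r
        simp only [Set.mem_ofPred_eq]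
        rw [AlgHom.commutes, AlgHom.commutes, Algebra.algebraMap_eq_smul_one, map_smul,
          Algebra.TensorProduct.one_def, actM_tmul]
        simp }
  exact Q_mem S hE hF hK a

/-- `Q = \bar U_i sl(2)` admits no universal R-matrix. -/
theorem statement3 (Δ : Q →ₐ[ℂ] TP2 ℂ Q)
    (hΔE : Δ gE = (1:Q) ⊗ₜ[ℂ] gE + gE ⊗ₜ[ℂ] gK)
    (hΔF : Δ gF = gKi ⊗ₜ[ℂ] gF + gF ⊗ₜ[ℂ] (1:Q))
    (hΔK : Δ gK = gK ⊗ₜ[ℂ] gK) :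
    ¬ ∃ R : TP2 ℂ Q, IsUnit R ∧
      (∀ a : Q, R * Δ a = flipA ℂ Q (Δ a) * R) ∧
      copL Δ R = emb13 ℂ Q R * emb23 ℂ Q R ∧
      copR Δ R = emb13 ℂ Q R * emb12 ℂ Q R := by
  rintro ⟨R, hu, hint, hL, hR⟩
  obtain ⟨ε, εE, εF, εK, -⟩ := exists_char 1 (by norm_num)
  obtain ⟨χ, χE, χF, χK, χKi⟩ := exists_char (-1) (by norm_num)
  obtain ⟨ρ, ρE, ρF, ρK, ρKi⟩ := exists_rep
  have hεε : ∀ a, ε (evL ε (Δ a)) = ε a := fun a => DFunLike.congr_fun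
    (Q_ext (ε.comp ((evL ε).comp Δ)) ε (by simp [hΔE, evL_tmul, εE])
      (by simp [hΔF, evL_tmul, εF]) (by simp [hΔK, evL_tmul, εK])) a
  have hχχ : ∀ a, χ (evL χ (Δ a)) = ε a := fun a => DFunLike.congr_fun
    (Q_ext (χ.comp ((evL χ).comp Δ)) ε (by simp [hΔE, evL_tmul, χE, εE])
      (by simp [hΔF, evL_tmul, χF, εF]) (by simp [hΔK, evL_tmul, χK, εK])) a
  have h1 : evL ε R = evL ε R * evL ε R := evL_hexL Δ ε ε ε hεε R hL
  have h2 : evL ε R = evL χ R * evL χ R := evL_hexL Δ χ χ ε hχχ R hL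
  have h3 : evL ε R = 1 := by
    have hu' : IsUnit (evL ε R) := hu.map (evL (B := Q) ε)
    exact (hu'.mul_left_cancel (by rw [mul_one]; exact h1)).symm
  have hg : Δ (evL χ R) = evL χ R ⊗ₜ[ℂ] evL χ R := evL_hexR Δ χ R hR
  have hgE := congrArg (evL (B := Q) χ) (hint gE)
  have hgK := congrArg (evL (B := Q) χ) (hint gK)
  rw [hΔE] at hgE
  rw [hΔK] at hgK
  rw [h3] at h2
  simp only [map_mul, map_add, flipA, LinearEquiv.coe_coe, TensorProduct.comm_tmul, evL_tmul,
    χE, χK, map_one, one_smul, zero_smul, add_zero, zero_add] at hgE hgK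
  generalize evL χ R = g at h2 hg hgE hgK
  have hεg : ε g * ε g = ε g := by
    have := hεε g
    rw [hg, evL_tmul, map_smul, smul_eq_mul] at this
    exact this
  have hεg2 : ε g = 1 := by
    rw [← hεg, ← map_mul, ← h2, map_one]
  have hJ := actM_inv Δ ρ ε !![0, -Complex.I; 1, 0]
    (by
      rw [hΔE, map_add, actM_tmul, actM_tmul, ρE, ρK, εE, map_one]
      ext i j; fin_cases i <;> fin_cases j <;>
        simp [Matrix.mul_apply, Matrix.vecMul, dotProduct, Fin.sum_univ_two])
    (by
      rw [hΔF, map_add, actM_tmul, actM_tmul, ρF, ρKi, εF, map_one]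
      ext i j; fin_cases i <;> fin_cases j <;>
        simp [Matrix.mul_apply, Matrix.vecMul, dotProduct, Fin.sum_univ_two])
    (by
      rw [hΔK, actM_tmul, ρK, εK]
      ext i j; fin_cases i <;> fin_cases j <;>
        simp [Matrix.mul_apply, Matrix.vecMul, dotProduct, Fin.sum_univ_two]) g
  rw [hg, actM_tmul, hεg2, one_smul] at hJ
  have e2 := congrArg ρ h2
  have eE := congrArg ρ hgE
  have eK := congrArg ρ hgK
  simp only [map_mul, map_smul, map_one, ρE, ρK] at e2 eE eK
  generalize ρ g = m at hJ e2 eE eK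
  have e2a := congrFun (congrFun e2 0) 0
  have eEa := congrFun (congrFun eE 0) 1
  have eKa := congrFun (congrFun eK 0) 1
  have eKb := congrFun (congrFun eK 1) 0
  have hJa := congrFun (congrFun hJ 1) 0
  simp [Matrix.mul_apply, Fin.sum_univ_two] at e2a eEa eKa eKb hJa
  have h01 : m 0 1 = 0 := by
    have : (2 * Complex.I) * m 0 1 = 0 := by linear_combination eKa
    simpa using this
  rw [h01] at e2a hJa
  have : (2 : ℂ) = 0 := by linear_combination e2a - hJa + m 0 0 * eEa
  norm_num at this
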